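/- Let n ≥ 1, let 1 ≤ p, q ≤ ∞, s > 0, α > 0, and choose 1 ≤ p₁, p₂, q₁, q₂ ≤ ∞ with 1/p = 1/p₁ + 1/p₂ and 1/q = 1/q₁ + 1/q₂. Then there exists a constant C > 0, depending only on n, s, α and these indices, such that for all Schwartz functions f₁, f₂ on ℝⁿ the para-product series T_{f₂} f₁ = Σ_{k∈ℤ} (Δ_k f₁)(S_{k−1} f₂) converges in the space of tempered distributions and satisfies ‖Σ_{k∈ℤ} (Δ_k f₁)(S_{k−1} f₂)‖_{Ḃ^s_{p,q}} ≤ C ‖f₁‖_{Ḃ^{s+α}_{p₁,q₁}} ‖f₂‖_{Ḃ^{-α}_{p₂,q₂}} in [0,∞]. -/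

import Mathlib

open MeasureTheory Real Complex Filter Function
open scoped ENNReal FourierTransform SchwartzMap

noncomputable section

/-- The properties of the radial smooth cutoff `χ` used to build the
Littlewood–Paley decomposition: smooth, compactly supported, radial,
`0 ≤ χ ≤ 1`, `χ = 1` on `{‖ξ‖ ≤ 3/4}` and `χ = 0` on `{‖ξ‖ > 4/3}`. -/
def IsLPCutoff {n : ℕ} (χ : EuclideanSpace ℝ (Fin n) → ℝ) : Prop :=
  ContDiff ℝ ((⊤ : ℕ∞) : WithTop ℕ∞) χ ∧ HasCompactSupport χ ∧
    (∀ ξ η, ‖ξ‖ = ‖η‖ → χ ξ = χ η) ∧ (∀ ξ, 0 ≤ χ ξ) ∧ (∀ ξ, χ ξ ≤ 1) ∧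
    (∀ ξ, ‖ξ‖ ≤ 3 / 4 → χ ξ = 1) ∧ (∀ ξ, 4 / 3 < ‖ξ‖ → χ ξ = 0)

/-- The low-frequency Littlewood–Paley projection `S_j f = 𝓕⁻¹(χ(·/2^j) 𝓕 f)`. -/
def Sproj {n : ℕ} (χ : EuclideanSpace ℝ (Fin n) → ℝ) (j : ℤ)
    (f : EuclideanSpace ℝ (Fin n) → ℂ) : EuclideanSpace ℝ (Fin n) → ℂ :=
  𝓕⁻ fun ξ => ((χ ((2 : ℝ) ^ (-j) • ξ) : ℝ) : ℂ) * 𝓕 f ξ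

/-- The Littlewood–Paley block `Δ_j f = 𝓕⁻¹(φ̂(·/2^j) 𝓕 f)`, where
`φ̂(ξ) = χ(ξ/2) - χ(ξ)`, i.e. `φ̂(ξ/2^j) = χ(ξ/2^(j+1)) - χ(ξ/2^j)`. -/
def Dproj {n : ℕ} (χ : EuclideanSpace ℝ (Fin n) → ℝ) (j : ℤ)
    (f : EuclideanSpace ℝ (Fin n) → ℂ) : EuclideanSpace ℝ (Fin n) → ℂ :=
  𝓕⁻ fun ξ => ((χ ((2 : ℝ) ^ (-(j + 1)) • ξ) - χ ((2 : ℝ) ^ (-j) • ξ) : ℝ) : ℂ) * 𝓕 f ξ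

/-- The `ℓ^q(ℤ)` norm of a sequence of extended nonnegative reals, with the usual
supremum modification for `q = ∞`. -/
def lqNorm (q : ℝ≥0∞) (a : ℤ → ℝ≥0∞) : ℝ≥0∞ :=
  if q = ∞ then ⨆ j, a j else (∑' j, a j ^ q.toReal) ^ (1 / q.toReal)

/-- The homogeneous Besov norm `‖f‖_{Ḃ^s_{p,q}}`, valued in `[0,∞]`. -/
def besovNorm {n : ℕ} (χ : EuclideanSpace ℝ (Fin n) → ℝ) (s : ℝ) (p q : ℝ≥0∞)
    (f : EuclideanSpace ℝ (Fin n) → ℂ) : ℝ≥0∞ :=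
  lqNorm q fun j => (2 : ℝ≥0∞) ^ ((j : ℝ) * s) * eLpNorm (Dproj χ j f) p volume

section SequenceNorms

lemma lqNorm_top (a : ℤ → ℝ≥0∞) : lqNorm ∞ a = ⨆ j, a j := if_pos rfl

lemma lqNorm_of_ne_top {q : ℝ≥0∞} (hq : q ≠ ∞) (a : ℤ → ℝ≥0∞) :
    lqNorm q a = (∑' j, a j ^ q.toReal) ^ (1 / q.toReal) := if_neg hq

lemma lqNorm_mono (q : ℝ≥0∞) {a b : ℤ → ℝ≥0∞} (h : ∀ j, a j ≤ b j) :
    lqNorm q a ≤ lqNorm q b := by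
  unfold lqNorm
  split_ifs
  · exact iSup_mono h
  · gcongr with j
    exact h j

lemma lqNorm_const_mul {q : ℝ≥0∞} (hq : 1 ≤ q) (c : ℝ≥0∞) (a : ℤ → ℝ≥0∞) :
    lqNorm q (fun j => c * a j) = c * lqNorm q a := by
  rcases eq_or_ne q ∞ with rfl | hqt
  · simp only [lqNorm_top, ENNReal.mul_iSup]
  · have hq0 : 0 < q.toReal := ENNReal.toReal_pos (zero_lt_one.trans_le hq).ne' hqt
    simp only [lqNorm_of_ne_top hqt, ENNReal.mul_rpow_of_nonneg _ _ hq0.le, ENNReal.tsum_mul_left]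
    rw [ENNReal.mul_rpow_of_nonneg _ _ (by positivity), ← ENNReal.rpow_mul,
      mul_one_div_cancel hq0.ne', ENNReal.rpow_one]

lemma lqNorm_comp_add_right (q : ℝ≥0∞) (a : ℤ → ℝ≥0∞) (i : ℤ) :
    lqNorm q (fun j => a (j + i)) = lqNorm q a := by
  unfold lqNorm
  split_ifs
  · exact (Equiv.addRight i).iSup_comp (g := a)
  · congr 1
    exact (Equiv.addRight i).tsum_eq (fun j => a j ^ q.toReal)

lemma lqNorm_add_le {q : ℝ≥0∞} (hq : 1 ≤ q) (a b : ℤ → ℝ≥0∞) :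
    lqNorm q (fun j => a j + b j) ≤ lqNorm q a + lqNorm q b := by
  rcases eq_or_ne q ∞ with rfl | hqt
  · simp only [lqNorm_top]
    exact iSup_le fun j => add_le_add (le_iSup a j) (le_iSup b j)
  · have hq1 : 1 ≤ q.toReal := by simpa using ENNReal.toReal_mono hqt hq
    simpa only [lqNorm_of_ne_top hqt, lintegral_count, Pi.add_apply] using
      ENNReal.lintegral_Lp_add_le (μ := Measure.count) (f := a) (g := b)
        measurable_from_top.aemeasurable measurable_from_top.aemeasurable hq1

lemma lqNorm_zero {q : ℝ≥0∞} (hq : 1 ≤ q) : lqNorm q (fun _ => 0) = 0 := by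
  simpa using lqNorm_const_mul hq 0 (fun _ => 0)

lemma lqNorm_sum_le {q : ℝ≥0∞} (hq : 1 ≤ q) {ι : Type*} (t : Finset ι)
    (a : ι → ℤ → ℝ≥0∞) :
    lqNorm q (fun j => ∑ i ∈ t, a i j) ≤ ∑ i ∈ t, lqNorm q (a i) := by
  classical
  induction t using Finset.induction_on with
  | empty => simp [lqNorm_zero hq]
  | insert i t hi ih =>
    simp only [Finset.sum_insert hi]
    exact (lqNorm_add_le hq _ _).trans (by gcongr)

lemma lqNorm_tsum_le {q : ℝ≥0∞} (hq : 1 ≤ q) (a : ℕ → ℤ → ℝ≥0∞) :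
    lqNorm q (fun j => ∑' l, a l j) ≤ ∑' l, lqNorm q (a l) := by
  rcases eq_or_ne q ∞ with rfl | hqt
  · simp only [lqNorm_top]
    exact iSup_le fun j => ENNReal.tsum_le_tsum fun l => le_iSup (a l) j
  · have hq0 : 0 < q.toReal := ENNReal.toReal_pos (zero_lt_one.trans_le hq).ne' hqt
    rw [lqNorm_of_ne_top hqt, one_div, ENNReal.rpow_inv_le_iff hq0, ENNReal.tsum_eq_iSup_sum]
    refine iSup_le fun t => ?_
    have hlim : Tendsto (fun N => ∑ j ∈ t, (∑ l ∈ Finset.range N, a l j) ^ q.toReal) atTop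
        (nhds (∑ j ∈ t, (∑' l, a l j) ^ q.toReal)) :=
      tendsto_finsetSum _ fun j _ =>
        (ENNReal.continuous_rpow_const.tendsto _).comp (ENNReal.tendsto_nat_tsum _)
    refine le_of_tendsto' hlim fun N => ?_
    calc ∑ j ∈ t, (∑ l ∈ Finset.range N, a l j) ^ q.toReal
        ≤ ∑' j, (∑ l ∈ Finset.range N, a l j) ^ q.toReal := ENNReal.sum_le_tsum t
      _ ≤ (∑' l, lqNorm q (a l)) ^ q.toReal := by
        rw [← ENNReal.rpow_inv_le_iff hq0, ← one_div, ← lqNorm_of_ne_top hqt]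
        exact (lqNorm_sum_le hq _ _).trans (ENNReal.sum_le_tsum _)

lemma lqNorm_mul_le {q q₁ q₂ : ℝ≥0∞} (hq : 1 ≤ q) (hq₁ : 1 ≤ q₁) (hq₂ : 1 ≤ q₂)
    (hq12 : 1 / q = 1 / q₁ + 1 / q₂) (a b : ℤ → ℝ≥0∞) :
    lqNorm q (fun j => a j * b j) ≤ lqNorm q₁ a * lqNorm q₂ b := by
  simp only [one_div] at hq12
  rcases eq_or_ne q₁ ∞ with rfl | hq₁t
  · obtain rfl : q = q₂ := by simpa using hq12
    rw [lqNorm_top, ← lqNorm_const_mul hq]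
    exact lqNorm_mono q fun j => by gcongr; exact le_iSup a j
  rcases eq_or_ne q₂ ∞ with rfl | hq₂t
  · obtain rfl : q = q₁ := by simpa using hq12
    rw [lqNorm_top, mul_comm, ← lqNorm_const_mul hq]
    exact lqNorm_mono q fun j => by rw [mul_comm]; gcongr; exact le_iSup b j
  have hqt : q ≠ ∞ := by
    rintro rfl
    have h := hq12.symm
    simp [hq₁t] at h
  have pos : ∀ {r : ℝ≥0∞}, 1 ≤ r → r ≠ ∞ → 0 < r.toReal := fun h ht =>
    ENNReal.toReal_pos (zero_lt_one.trans_le h).ne' ht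
  have hreal : 1 / q.toReal = 1 / q₁.toReal + 1 / q₂.toReal := by
    have h := congrArg ENNReal.toReal hq12
    rw [ENNReal.toReal_add (ENNReal.inv_ne_top.2 (zero_lt_one.trans_le hq₁).ne')
      (ENNReal.inv_ne_top.2 (zero_lt_one.trans_le hq₂).ne')] at h
    simpa [ENNReal.toReal_inv] using h
  have hlt : q.toReal < q₁.toReal := by
    rw [← one_div_lt_one_div (pos hq₁ hq₁t) (pos hq hqt), hreal]
    have := one_div_pos.2 (pos hq₂ hq₂t)
    linarith
  simpa only [lqNorm_of_ne_top hqt, lqNorm_of_ne_top hq₁t, lqNorm_of_ne_top hq₂t, lintegral_count,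
    Pi.mul_apply] using
    ENNReal.lintegral_Lp_mul_le_Lq_mul_Lr (pos hq hqt) hlt hreal Measure.count (f := a) (g := b)
      measurable_from_top.aemeasurable measurable_from_top.aemeasurable

end SequenceNorms

section YoungInequality

variable {E : Type*} [NormedAddCommGroup E] [MeasurableSpace E] [BorelSpace E]
  [SecondCountableTopology E] {μ : Measure E} [SFinite μ] [μ.IsAddLeftInvariant]
  [μ.IsNegInvariant]

open scoped Convolution in
/-- The Young inequality `‖K ⋆ g‖_p ≤ ‖K‖_1 ‖g‖_p`. -/
lemma eLpNorm_convolution_le {p : ℝ≥0∞} (hp : 1 ≤ p) {K g : E → ℂ} (hK : Continuous K)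
    (hg : Continuous g) :
    eLpNorm (K ⋆[ContinuousLinearMap.mul ℂ ℂ, μ] g) p μ ≤ (∫⁻ y, ‖K y‖ₑ ∂μ) * eLpNorm g p μ := by
  have hpt : ∀ x, ‖(K ⋆[ContinuousLinearMap.mul ℂ ℂ, μ] g) x‖ₑ ≤
      ∫⁻ y, ‖K y‖ₑ * ‖g (x - y)‖ₑ ∂μ := fun x =>
    (enorm_integral_le_lintegral_enorm _).trans_eq (by simp [enorm_mul])
  have hinv : ∀ x, MeasurePreserving (fun y => x - y) μ μ := fun x =>
    Measure.measurePreserving_sub_left μ x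
  rcases eq_or_ne p ∞ with rfl | hpt'
  · rw [eLpNorm_exponent_top, eLpNorm_exponent_top]
    refine eLpNormEssSup_le_of_ae_enorm_bound (ae_of_all _ fun x => (hpt x).trans ?_)
    rw [← lintegral_mul_const'' _ hK.enorm.aemeasurable]
    refine lintegral_mono_ae ?_
    filter_upwards [(hinv x).quasiMeasurePreserving.ae (ae_le_eLpNormEssSup (f := g))] with y hy
    gcongr
  have hp0 : 0 < p.toReal := ENNReal.toReal_pos (zero_lt_one.trans_le hp).ne' hpt'
  have hp1 : 1 ≤ p.toReal := by simpa using ENNReal.toReal_mono hpt' hp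
  set r := p.toReal
  have hmeas : Measurable fun z : E × E => ‖K z.2‖ₑ * ‖g (z.1 - z.2)‖ₑ ^ r := by fun_prop
  have hHolder : ∀ x, (∫⁻ y, ‖K y‖ₑ * ‖g (x - y)‖ₑ ∂μ) ^ r ≤
      (∫⁻ y, ‖K y‖ₑ ∂μ) ^ (r - 1) * ∫⁻ y, ‖K y‖ₑ * ‖g (x - y)‖ₑ ^ r ∂μ := fun x => by
    have h := ENNReal.lintegral_mul_norm_pow_le (μ := μ) (f := fun y => ‖K y‖ₑ)
      (g := fun y => ‖K y‖ₑ * ‖g (x - y)‖ₑ ^ r) (p := 1 - 1 / r) (q := 1 / r)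
      (by fun_prop) (by fun_prop) (by simpa using inv_le_one_of_one_le₀ hp1) (by positivity)
      (by ring)
    have e : ∀ y, ‖K y‖ₑ ^ (1 - 1 / r) * (‖K y‖ₑ * ‖g (x - y)‖ₑ ^ r) ^ (1 / r) =
        ‖K y‖ₑ * ‖g (x - y)‖ₑ := fun y => by
      rw [ENNReal.mul_rpow_of_nonneg _ _ (by positivity), ← ENNReal.rpow_mul,
        mul_one_div_cancel hp0.ne', ENNReal.rpow_one, ← mul_assoc,
        ← ENNReal.rpow_add_of_nonneg _ _ (by simpa using inv_le_one_of_one_le₀ hp1)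
          (by positivity)]
      simp
    simp only [e] at h
    refine (ENNReal.rpow_le_rpow h hp0.le).trans_eq ?_
    rw [ENNReal.mul_rpow_of_nonneg _ _ hp0.le, ← ENNReal.rpow_mul, ← ENNReal.rpow_mul,
      one_div_mul_cancel hp0.ne', ENNReal.rpow_one]
    congr 2
    field_simp
  rw [eLpNorm_eq_lintegral_rpow_enorm_toReal (zero_lt_one.trans_le hp).ne' hpt',
    eLpNorm_eq_lintegral_rpow_enorm_toReal (zero_lt_one.trans_le hp).ne' hpt', one_div,
    ENNReal.rpow_inv_le_iff hp0, ENNReal.mul_rpow_of_nonneg _ _ hp0.le, ← ENNReal.rpow_mul,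
    inv_mul_cancel₀ hp0.ne', ENNReal.rpow_one]
  calc ∫⁻ x, ‖(K ⋆[ContinuousLinearMap.mul ℂ ℂ, μ] g) x‖ₑ ^ r ∂μ
      ≤ ∫⁻ x, (∫⁻ y, ‖K y‖ₑ ∂μ) ^ (r - 1) * ∫⁻ y, ‖K y‖ₑ * ‖g (x - y)‖ₑ ^ r ∂μ ∂μ :=
        lintegral_mono fun x => (ENNReal.rpow_le_rpow (hpt x) hp0.le).trans (hHolder x)
    _ = (∫⁻ y, ‖K y‖ₑ ∂μ) ^ (r - 1) * ∫⁻ y, ∫⁻ x, ‖K y‖ₑ * ‖g (x - y)‖ₑ ^ r ∂μ ∂μ := by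
        rw [lintegral_const_mul _ hmeas.lintegral_prod_right', lintegral_lintegral_swap
          hmeas.aemeasurable]
    _ = (∫⁻ y, ‖K y‖ₑ ∂μ) ^ (r - 1) * ((∫⁻ y, ‖K y‖ₑ ∂μ) * ∫⁻ x, ‖g x‖ₑ ^ r ∂μ) := by
        congr 1
        rw [← lintegral_mul_const _ (by fun_prop)]
        refine lintegral_congr fun y => ?_
        have hgy : Measurable fun x => ‖g (x - y)‖ₑ ^ r :=
          (hg.comp (continuous_sub_right y)).enorm.measurable.pow_const r
        rw [lintegral_const_mul _ hgy,
          lintegral_sub_right_eq_self (fun x => ‖g x‖ₑ ^ r) y]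
    _ = (∫⁻ y, ‖K y‖ₑ ∂μ) ^ r * ∫⁻ x, ‖g x‖ₑ ^ r ∂μ := by
        rw [← mul_assoc]
        congr 1
        conv_lhs => rw [← ENNReal.rpow_one (∫⁻ y, ‖K y‖ₑ ∂μ), ← ENNReal.rpow_mul, one_mul,
          ← ENNReal.rpow_add_of_nonneg _ _ (by linarith) zero_le_one, sub_add_cancel]

end YoungInequality

section FourierMultipliers

variable {V : Type*} [NormedAddCommGroup V] [InnerProductSpace ℝ V] {m : V → ℝ}

/-- A smooth compactly supported real symbol as a complex Schwartz function. -/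
def schwartzSymbol (hm : ContDiff ℝ ((⊤ : ℕ∞) : WithTop ℕ∞) m) (hc : HasCompactSupport m) :
    𝓢(V, ℂ) :=
  (hc.comp_left (g := ((↑) : ℝ → ℂ)) Complex.ofReal_zero).toSchwartzMap
    (Complex.ofRealCLM.contDiff.comp hm)

/-- The product of two Schwartz functions. -/
def schwartzMul (f g : 𝓢(V, ℂ)) : 𝓢(V, ℂ) :=
  SchwartzMap.pairing (ContinuousLinearMap.mul ℂ ℂ) f g

lemma schwartzMul_apply (f g : 𝓢(V, ℂ)) (x : V) : schwartzMul f g x = f x * g x := rfl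

variable [FiniteDimensional ℝ V] [MeasurableSpace V] [BorelSpace V]

/-- The Fourier multiplier `f ↦ 𝓕⁻¹(m 𝓕 f)` with real symbol `m`. -/
def fourierMult (m : V → ℝ) (f : V → ℂ) : V → ℂ := 𝓕⁻ fun ξ => (m ξ : ℂ) * 𝓕 f ξ

lemma enorm_fourierInv_le (h : V → ℂ) (x : V) : ‖𝓕⁻ h x‖ₑ ≤ ∫⁻ ξ, ‖h ξ‖ₑ := by
  rw [Real.fourierInv_eq]
  refine (enorm_integral_le_lintegral_enorm _).trans_eq (lintegral_congr fun ξ => ?_)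
  rw [← ofReal_norm, Circle.norm_smul, ofReal_norm]

lemma fourierInv_comp_smul (h : V → ℂ) {c : ℝ} (hc : c ≠ 0) (x : V) :
    𝓕⁻ (fun ξ => h (c • ξ)) x =
      |(c ^ Module.finrank ℝ V)⁻¹| • 𝓕⁻ h (c⁻¹ • x) := by
  rw [Real.fourierInv_eq, Real.fourierInv_eq, ← Measure.integral_comp_smul volume
    (fun ξ => 𝐞 (inner ℝ ξ (c⁻¹ • x)) • h ξ) c]
  simp [inner_smul_left, inner_smul_right, hc]

lemma lintegral_enorm_comp_smul (h : V → ℂ) {c : ℝ} (hc : c ≠ 0) :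
    ∫⁻ x, ‖|c ^ Module.finrank ℝ V| • h (c • x)‖ₑ = ∫⁻ x, ‖h x‖ₑ := by
  have hmap := Measure.map_addHaar_smul (volume : Measure V) hc
  have hemb : MeasurableEmbedding fun x : V => c • x :=
    (Homeomorph.smulOfNeZero c hc).measurableEmbedding
  have h1 : ∫⁻ x, ‖h (c • x)‖ₑ = ENNReal.ofReal |(c ^ Module.finrank ℝ V)⁻¹| * ∫⁻ x, ‖h x‖ₑ := by
    rw [← hemb.lintegral_map (fun x => ‖h x‖ₑ), hmap, lintegral_smul_measure, smul_eq_mul]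
  have hpos : 0 < |c ^ Module.finrank ℝ V| := abs_pos.2 (pow_ne_zero _ hc)
  simp only [enorm_smul]
  rw [lintegral_const_mul' _ _ enorm_ne_top, h1, ← mul_assoc, Real.enorm_eq_ofReal_abs, abs_abs,
    ← ENNReal.ofReal_mul hpos.le, abs_inv, mul_inv_cancel₀ hpos.ne', ENNReal.ofReal_one, one_mul]

lemma lintegral_enorm_fourierInv_comp_smul (h : V → ℂ) {c : ℝ} (hc : c ≠ 0) :
    ∫⁻ x, ‖𝓕⁻ (fun ξ => h (c • ξ)) x‖ₑ = ∫⁻ x, ‖𝓕⁻ h x‖ₑ := by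
  simp only [fourierInv_comp_smul h hc, ← inv_pow]
  exact lintegral_enorm_comp_smul _ (inv_ne_zero hc)

lemma fourierMult_eq_fourierInv (hm : ContDiff ℝ ((⊤ : ℕ∞) : WithTop ℕ∞) m)
    (hc : HasCompactSupport m) (f : 𝓢(V, ℂ)) :
    fourierMult m f = ⇑(𝓕⁻ (schwartzMul (schwartzSymbol hm hc) (𝓕 f)) : 𝓢(V, ℂ)) := by
  rw [SchwartzMap.fourierInv_coe]
  rfl

lemma eLpNorm_fourierMult_le (hm : ContDiff ℝ ((⊤ : ℕ∞) : WithTop ℕ∞) m)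
    (hc : HasCompactSupport m) {p : ℝ≥0∞} (hp : 1 ≤ p) (f : 𝓢(V, ℂ)) :
    eLpNorm (fourierMult m f) p volume ≤
      (∫⁻ x, ‖𝓕⁻ (fun ξ => (m ξ : ℂ)) x‖ₑ) * eLpNorm f p volume := by
  have hconv : SchwartzMap.convolution (ContinuousLinearMap.mul ℂ ℂ)
      (𝓕⁻ (schwartzSymbol hm hc)) f = 𝓕⁻ (schwartzMul (schwartzSymbol hm hc) (𝓕 f)) := by
    rw [← FourierTransform.fourierInv_fourier_eq (F := 𝓢(V, ℂ)) (SchwartzMap.convolution _ _ _),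
      SchwartzMap.fourier_convolution, FourierTransform.fourier_fourierInv_eq]
    rfl
  rw [fourierMult_eq_fourierInv hm hc, ← hconv, funext (SchwartzMap.convolution_apply _ _ f)]
  refine (eLpNorm_convolution_le hp (SchwartzMap.continuous _) f.continuous).trans_eq ?_
  rw [SchwartzMap.fourierInv_coe]
  rfl

lemma lintegral_enorm_fourierInv_lt_top (hm : ContDiff ℝ ((⊤ : ℕ∞) : WithTop ℕ∞) m)
    (hc : HasCompactSupport m) : ∫⁻ x, ‖𝓕⁻ (fun ξ => (m ξ : ℂ)) x‖ₑ < ∞ := by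
  have h := (𝓕⁻ (schwartzSymbol hm hc) : 𝓢(V, ℂ)).integrable (μ := volume)
  rw [SchwartzMap.fourierInv_coe] at h
  exact h.hasFiniteIntegral

lemma eLpNorm_fourierMult_comp_smul_le (hm : ContDiff ℝ ((⊤ : ℕ∞) : WithTop ℕ∞) m)
    (hc : HasCompactSupport m) {c : ℝ} (hc0 : c ≠ 0) {p : ℝ≥0∞} (hp : 1 ≤ p) (f : 𝓢(V, ℂ)) :
    eLpNorm (fourierMult (fun ξ => m (c • ξ)) f) p volume ≤
      (∫⁻ x, ‖𝓕⁻ (fun ξ => (m ξ : ℂ)) x‖ₑ) * eLpNorm f p volume := by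
  refine (eLpNorm_fourierMult_le (m := fun ξ => m (c • ξ)) (by fun_prop)
    (hc.comp_smul hc0) hp f).trans_eq ?_
  rw [lintegral_enorm_fourierInv_comp_smul (fun ξ => (m ξ : ℂ)) hc0]

/-- The Fourier transform of a product is the convolution of the Fourier transforms. -/
lemma fourier_schwartzMul_fourierInv (a b : 𝓢(V, ℂ)) :
    𝓕 (schwartzMul (𝓕⁻ a) (𝓕⁻ b)) =
      SchwartzMap.convolution (ContinuousLinearMap.mul ℂ ℂ) a b := by
  rw [← FourierTransform.fourier_fourierInv_eq (E := 𝓢(V, ℂ)) (F := 𝓢(V, ℂ))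
    (SchwartzMap.convolution _ _ _)]
  congr 1
  ext x
  have h := congrArg (fun u : 𝓢(V, ℂ) => u (-x))
    (SchwartzMap.fourier_convolution (ContinuousLinearMap.mul ℂ ℂ) a b)
  simp only [SchwartzMap.pairing_apply_apply, SchwartzMap.fourier_coe] at h
  simp only [schwartzMul_apply, SchwartzMap.fourierInv_coe, Real.fourierInv_eq_fourier_neg]
  exact h.symm

lemma fourier_schwartzMul_eq_zero {a b : 𝓢(V, ℂ)} {ξ : V}
    (h : ∀ η, a η ≠ 0 → b (ξ - η) = 0) : 𝓕 (schwartzMul (𝓕⁻ a) (𝓕⁻ b)) ξ = 0 := by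
  rw [fourier_schwartzMul_fourierInv, SchwartzMap.convolution_apply, convolution_def]
  refine integral_eq_zero_of_ae (ae_of_all _ fun η => ?_)
  by_cases hη : a η = 0
  · simp [hη]
  · simp [h η hη]

end FourierMultipliers

section LittlewoodPaley

variable {n : ℕ} {χ : EuclideanSpace ℝ (Fin n) → ℝ}

/-- The symbol `φ̂(ξ) = χ(ξ/2) - χ(ξ)` of the Littlewood–Paley block `Δ_0`. -/
def blockSymbol (χ : EuclideanSpace ℝ (Fin n) → ℝ) (ξ : EuclideanSpace ℝ (Fin n)) : ℝ :=
  χ ((2 : ℝ)⁻¹ • ξ) - χ ξ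

lemma blockSymbol_smul (χ : EuclideanSpace ℝ (Fin n) → ℝ) (j : ℤ)
    (ξ : EuclideanSpace ℝ (Fin n)) :
    blockSymbol χ ((2 : ℝ) ^ (-j) • ξ) =
      χ ((2 : ℝ) ^ (-(j + 1)) • ξ) - χ ((2 : ℝ) ^ (-j) • ξ) := by
  rw [blockSymbol, smul_smul, ← zpow_neg_one, ← zpow_add₀ two_ne_zero, neg_add, add_comm (-1)]

lemma Sproj_eq_fourierMult (χ : EuclideanSpace ℝ (Fin n) → ℝ) (j : ℤ)
    (f : EuclideanSpace ℝ (Fin n) → ℂ) :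
    Sproj χ j f = fourierMult (fun ξ => χ ((2 : ℝ) ^ (-j) • ξ)) f := rfl

lemma Dproj_eq_fourierMult (χ : EuclideanSpace ℝ (Fin n) → ℝ) (j : ℤ)
    (f : EuclideanSpace ℝ (Fin n) → ℂ) :
    Dproj χ j f = fourierMult (fun ξ => blockSymbol χ ((2 : ℝ) ^ (-j) • ξ)) f := by
  simp only [blockSymbol_smul]
  rfl

namespace IsLPCutoff

lemma contDiff (hχ : IsLPCutoff χ) : ContDiff ℝ ((⊤ : ℕ∞) : WithTop ℕ∞) χ := hχ.1

lemma hasCompactSupport (hχ : IsLPCutoff χ) : HasCompactSupport χ := hχ.2.1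

lemma nonneg (hχ : IsLPCutoff χ) (ξ : EuclideanSpace ℝ (Fin n)) : 0 ≤ χ ξ := hχ.2.2.2.1 ξ

lemma le_one (hχ : IsLPCutoff χ) (ξ : EuclideanSpace ℝ (Fin n)) : χ ξ ≤ 1 := hχ.2.2.2.2.1 ξ

lemma eq_one (hχ : IsLPCutoff χ) {ξ : EuclideanSpace ℝ (Fin n)} (h : ‖ξ‖ ≤ 3 / 4) : χ ξ = 1 :=
  hχ.2.2.2.2.2.1 ξ h

lemma eq_zero (hχ : IsLPCutoff χ) {ξ : EuclideanSpace ℝ (Fin n)} (h : 4 / 3 < ‖ξ‖) : χ ξ = 0 :=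
  hχ.2.2.2.2.2.2 ξ h

lemma contDiff_blockSymbol (hχ : IsLPCutoff χ) :
    ContDiff ℝ ((⊤ : ℕ∞) : WithTop ℕ∞) (blockSymbol χ) := by
  have := hχ.contDiff
  unfold blockSymbol
  fun_prop

lemma hasCompactSupport_blockSymbol (hχ : IsLPCutoff χ) : HasCompactSupport (blockSymbol χ) :=
  (hχ.hasCompactSupport.comp_smul (by norm_num : (2 : ℝ)⁻¹ ≠ 0)).sub hχ.hasCompactSupport

lemma abs_blockSymbol_le (hχ : IsLPCutoff χ) (ξ : EuclideanSpace ℝ (Fin n)) :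
    |blockSymbol χ ξ| ≤ 1 := by
  rw [abs_le, blockSymbol]
  constructor <;> linarith [hχ.nonneg ξ, hχ.le_one ξ, hχ.nonneg ((2 : ℝ)⁻¹ • ξ),
    hχ.le_one ((2 : ℝ)⁻¹ • ξ)]

lemma norm_le_of_ne_zero (hχ : IsLPCutoff χ) {j : ℤ} {ξ : EuclideanSpace ℝ (Fin n)}
    (h : χ ((2 : ℝ) ^ (-j) • ξ) ≠ 0) : ‖ξ‖ ≤ 4 / 3 * 2 ^ j := by
  contrapose! h
  refine hχ.eq_zero ?_
  have h2 : (0 : ℝ) < 2 ^ j := by positivity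
  rwa [norm_smul, zpow_neg, norm_inv, Real.norm_of_nonneg h2.le, ← div_eq_inv_mul, lt_div_iff₀ h2]

lemma norm_mem_of_blockSymbol_ne_zero (hχ : IsLPCutoff χ) {j : ℤ} {ξ : EuclideanSpace ℝ (Fin n)}
    (h : blockSymbol χ ((2 : ℝ) ^ (-j) • ξ) ≠ 0) :
    3 / 4 * 2 ^ j < ‖ξ‖ ∧ ‖ξ‖ ≤ 8 / 3 * 2 ^ j := by
  have h2 : (0 : ℝ) < 2 ^ j := by positivity
  have hnorm : ‖(2 : ℝ) ^ (-j) • ξ‖ = ‖ξ‖ / 2 ^ j := by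
    rw [norm_smul, zpow_neg, norm_inv, Real.norm_of_nonneg h2.le, div_eq_inv_mul]
  constructor
  · contrapose! h
    have h1 : ‖(2 : ℝ) ^ (-j) • ξ‖ ≤ 3 / 4 := by rwa [hnorm, div_le_iff₀ h2]
    rw [blockSymbol, hχ.eq_one h1, hχ.eq_one, sub_self]
    rw [norm_smul, norm_inv, Real.norm_two]
    linarith [norm_nonneg ((2 : ℝ) ^ (-j) • ξ)]
  · contrapose! h
    have h1 : 8 / 3 < ‖(2 : ℝ) ^ (-j) • ξ‖ := by rwa [hnorm, lt_div_iff₀ h2]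
    rw [blockSymbol, hχ.eq_zero, hχ.eq_zero, sub_self]
    · linarith
    · rw [norm_smul, norm_inv, Real.norm_two]
      linarith

lemma exists_Sproj_eq (hχ : IsLPCutoff χ) (j : ℤ) (f : 𝓢(EuclideanSpace ℝ (Fin n), ℂ)) :
    ∃ a : 𝓢(EuclideanSpace ℝ (Fin n), ℂ),
      (∀ ξ, a ξ = (χ ((2 : ℝ) ^ (-j) • ξ) : ℂ) * 𝓕 f ξ) ∧
      Sproj χ j f = ⇑(𝓕⁻ a : 𝓢(EuclideanSpace ℝ (Fin n), ℂ)) := by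
  have hc : (2 : ℝ) ^ (-j) ≠ 0 := by positivity
  have hm : ContDiff ℝ ((⊤ : ℕ∞) : WithTop ℕ∞) fun ξ => χ ((2 : ℝ) ^ (-j) • ξ) := by
    have := hχ.contDiff
    fun_prop
  exact ⟨_, fun _ => rfl, fourierMult_eq_fourierInv hm (hχ.hasCompactSupport.comp_smul hc) f⟩

lemma exists_Dproj_eq (hχ : IsLPCutoff χ) (j : ℤ) (f : 𝓢(EuclideanSpace ℝ (Fin n), ℂ)) :
    ∃ a : 𝓢(EuclideanSpace ℝ (Fin n), ℂ),
      (∀ ξ, a ξ = (blockSymbol χ ((2 : ℝ) ^ (-j) • ξ) : ℂ) * 𝓕 f ξ) ∧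
      Dproj χ j f = ⇑(𝓕⁻ a : 𝓢(EuclideanSpace ℝ (Fin n), ℂ)) := by
  have hc : (2 : ℝ) ^ (-j) ≠ 0 := by positivity
  have hm : ContDiff ℝ ((⊤ : ℕ∞) : WithTop ℕ∞) fun ξ => blockSymbol χ ((2 : ℝ) ^ (-j) • ξ) := by
    have := hχ.contDiff_blockSymbol
    fun_prop
  rw [Dproj_eq_fourierMult]
  exact ⟨_, fun _ => rfl,
    fourierMult_eq_fourierInv hm (hχ.hasCompactSupport_blockSymbol.comp_smul hc) f⟩

lemma Dproj_eq_sub (hχ : IsLPCutoff χ) (j : ℤ) (f : 𝓢(EuclideanSpace ℝ (Fin n), ℂ)) :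
    Dproj χ j f = Sproj χ (j + 1) f - Sproj χ j f := by
  obtain ⟨a, ha, hDa⟩ := hχ.exists_Dproj_eq j f
  obtain ⟨b, hb, hSb⟩ := hχ.exists_Sproj_eq (j + 1) f
  obtain ⟨c, hc, hSc⟩ := hχ.exists_Sproj_eq j f
  have habc : a = b - c := by
    ext ξ
    rw [sub_apply, ha, hb, hc, blockSymbol_smul]
    push_cast
    ring
  have h : (𝓕⁻ a : 𝓢(EuclideanSpace ℝ (Fin n), ℂ)) = 𝓕⁻ b - 𝓕⁻ c := by
    rw [habc]
    exact map_sub (FourierTransform.fourierInvCLM ℂ 𝓢(EuclideanSpace ℝ (Fin n), ℂ)) b c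
  rw [hDa, hSb, hSc, h]
  rfl

lemma tendsto_Sproj_sub_nat (hχ : IsLPCutoff χ) [NeZero n] (k : ℤ)
    (f : 𝓢(EuclideanSpace ℝ (Fin n), ℂ)) (x : EuclideanSpace ℝ (Fin n)) :
    Tendsto (fun N : ℕ => Sproj χ (k - N) f x) atTop (nhds 0) := by
  rw [tendsto_zero_iff_enorm_tendsto_zero]
  have hlim : Tendsto (fun N : ℕ => ∫⁻ ξ, ‖(χ ((2 : ℝ) ^ (-(k - N : ℤ)) • ξ) : ℂ) *
      𝓕 (f : EuclideanSpace ℝ (Fin n) → ℂ) ξ‖ₑ) atTop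
      (nhds (∫⁻ _ : EuclideanSpace ℝ (Fin n), 0)) := by
    have hf : Continuous (𝓕 (f : EuclideanSpace ℝ (Fin n) → ℂ)) := (𝓕 f).continuous
    have hχc := hχ.contDiff.continuous
    refine tendsto_lintegral_of_dominated_convergence
      (fun ξ => ‖𝓕 (f : EuclideanSpace ℝ (Fin n) → ℂ) ξ‖ₑ) (fun N => ?_)
      (fun N => ae_of_all _ fun ξ => ?_) ?_ ?_
    · exact Continuous.measurable (by fun_prop)
    · dsimp only
      rw [enorm_mul]
      refine mul_le_of_le_one_left' ?_
      rw [← ofReal_norm, Complex.norm_real, Real.norm_of_nonneg (hχ.nonneg _)]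
      exact ENNReal.ofReal_le_one.2 (hχ.le_one _)
    · exact (𝓕 f).integrable.hasFiniteIntegral.ne
    · have h0 : ∀ᵐ ξ : EuclideanSpace ℝ (Fin n), ξ ≠ 0 :=
        compl_mem_ae_iff.2 (measure_singleton 0)
      filter_upwards [h0] with ξ hξ
      have hev : Tendsto (fun N : ℕ => (2 : ℝ) ^ N * (2 ^ (-k) * ‖ξ‖)) atTop atTop :=
        (tendsto_pow_atTop_atTop_of_one_lt one_lt_two).atTop_mul_const
          (mul_pos (by positivity) (norm_pos_iff.2 hξ))
      refine tendsto_const_nhds.congr' ?_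
      filter_upwards [hev.eventually_gt_atTop (4 / 3)] with N hN
      rw [hχ.eq_zero, Complex.ofReal_zero, zero_mul, enorm_zero]
      rwa [norm_smul, Real.norm_of_nonneg (by positivity), neg_sub, sub_eq_add_neg,
        zpow_add₀ two_ne_zero, zpow_natCast, mul_assoc]
  rw [lintegral_zero] at hlim
  exact tendsto_of_tendsto_of_tendsto_of_le_of_le tendsto_const_nhds hlim (fun _ => zero_le)
    fun N => enorm_fourierInv_le _ x

lemma eLpNorm_Sproj_le (hχ : IsLPCutoff χ) [NeZero n] {p : ℝ≥0∞} (hp : 1 ≤ p) (k : ℤ)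
    (f : 𝓢(EuclideanSpace ℝ (Fin n), ℂ)) :
    eLpNorm (Sproj χ k f) p volume ≤ ∑' l : ℕ, eLpNorm (Dproj χ (k - 1 - l) f) p volume := by
  have hsum : ∀ N : ℕ, ∑ l ∈ Finset.range N, Dproj χ (k - 1 - l) f =
      Sproj χ k f - Sproj χ (k - N) f := by
    intro N
    induction N with
    | zero => simp
    | succ N ih =>
      rw [Finset.sum_range_succ, ih, hχ.Dproj_eq_sub]
      have e1 : k - 1 - (N : ℤ) + 1 = k - N := by ring
      have e2 : k - 1 - (N : ℤ) = k - (N + 1 : ℕ) := by push_cast; ring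
      rw [e1, e2, sub_add_sub_cancel]
  have hmeas : ∀ j, AEStronglyMeasurable (Dproj χ j f) volume := fun j => by
    obtain ⟨a, -, ha⟩ := hχ.exists_Dproj_eq j f
    rw [ha]
    exact (SchwartzMap.continuous _).aestronglyMeasurable
  refine (Lp.eLpNorm_lim_le_liminf_eLpNorm (p := p) (μ := volume)
    (f := fun N => ∑ l ∈ Finset.range N, Dproj χ (k - 1 - l) f)
    (fun N => Finset.aestronglyMeasurable_sum _ fun l _ => hmeas _) _
    (ae_of_all _ fun x => ?_)).trans ?_
  · simp only [hsum, Pi.sub_apply]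
    simpa using (hχ.tendsto_Sproj_sub_nat k f x).const_sub (Sproj χ k f x)
  · refine liminf_le_of_le (by isBoundedDefault) fun b hb => ?_
    obtain ⟨N, hN⟩ := hb.exists
    exact hN.trans ((eLpNorm_sum_le (fun l _ => hmeas _) hp).trans (ENNReal.sum_le_tsum _))

lemma tsum_enorm_blockSymbol_le (hχ : IsLPCutoff χ) (ξ : EuclideanSpace ℝ (Fin n)) :
    ∑' k : ℤ, ‖(blockSymbol χ ((2 : ℝ) ^ (-k) • ξ) : ℂ)‖ₑ ≤ 3 := by
  rcases eq_or_ne ξ 0 with rfl | hξ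
  · simp [blockSymbol]
  obtain ⟨k₀, hk₀, hk₀'⟩ := exists_mem_Ico_zpow (norm_pos_iff.2 hξ) (one_lt_two (α := ℝ))
  rw [tsum_eq_sum (s := Finset.Icc (k₀ - 1) (k₀ + 1))]
  · refine (Finset.sum_le_card_nsmul _ _ 1 fun k _ => ?_).trans_eq ?_
    · rw [← ofReal_norm, Complex.norm_real]
      exact ENNReal.ofReal_le_one.2 (hχ.abs_blockSymbol_le _)
    · simp [Int.card_Icc, show k₀ + 1 + 1 - (k₀ - 1) = 3 by ring]
  · intro k hk
    by_contra h
    have hne : blockSymbol χ ((2 : ℝ) ^ (-k) • ξ) ≠ 0 := by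
      intro h0
      exact h (by rw [h0, Complex.ofReal_zero, enorm_zero])
    obtain ⟨h1, h2⟩ := hχ.norm_mem_of_blockSymbol_ne_zero hne
    rw [zpow_add_one₀ two_ne_zero] at hk₀'
    rw [Finset.mem_Icc, not_and_or, not_le, not_le] at hk
    have hpos : (0 : ℝ) < 2 ^ k := by positivity
    rcases hk with hk | hk
    · have := zpow_le_zpow_right₀ (one_le_two (α := ℝ)) (show k + 2 ≤ k₀ by omega)
      rw [zpow_add₀ two_ne_zero] at this
      norm_num at this
      linarith
    · have := zpow_le_zpow_right₀ (one_le_two (α := ℝ)) (show k₀ + 2 ≤ k by omega)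
      rw [zpow_add₀ two_ne_zero] at this
      norm_num at this
      linarith

lemma exists_summable_norm_Dproj_le (hχ : IsLPCutoff χ) (f : 𝓢(EuclideanSpace ℝ (Fin n), ℂ)) :
    ∃ B : ℤ → ℝ, Summable B ∧ (∀ k, 0 ≤ B k) ∧ ∀ k x, ‖Dproj χ k f x‖ ≤ B k := by
  set B : ℤ → ℝ≥0∞ := fun k => ∫⁻ ξ, ‖(blockSymbol χ ((2 : ℝ) ^ (-k) • ξ) : ℂ)‖ₑ * ‖𝓕 f ξ‖ₑ with hB
  have hcont := (𝓕 f).continuous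
  have hχc := hχ.contDiff_blockSymbol.continuous
  have hfin : ∑' k, B k ≠ ∞ := by
    rw [hB, ← lintegral_tsum fun k => by fun_prop]
    refine ((lintegral_mono fun ξ => ?_).trans_lt (b := ∫⁻ ξ, 3 * ‖𝓕 f ξ‖ₑ) ?_).ne
    · rw [ENNReal.tsum_mul_right]
      gcongr
      exact hχ.tsum_enorm_blockSymbol_le ξ
    · rw [lintegral_const_mul _ (by fun_prop)]
      exact ENNReal.mul_lt_top (by simp) (𝓕 f).integrable.hasFiniteIntegral
  refine ⟨fun k => (B k).toReal, ENNReal.summable_toReal hfin, fun _ => ENNReal.toReal_nonneg,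
    fun k x => ?_⟩
  rw [← toReal_enorm, Dproj_eq_fourierMult]
  refine ENNReal.toReal_mono (ENNReal.ne_top_of_tsum_ne_top hfin k)
    ((enorm_fourierInv_le _ x).trans_eq ?_)
  simp only [hB, enorm_mul]
  rfl

lemma exists_norm_Sproj_le (hχ : IsLPCutoff χ) (f : 𝓢(EuclideanSpace ℝ (Fin n), ℂ)) :
    ∃ M : ℝ, ∀ k x, ‖Sproj χ k f x‖ ≤ M := by
  refine ⟨(∫⁻ ξ, ‖𝓕 f ξ‖ₑ).toReal, fun k x => ?_⟩
  rw [← toReal_enorm]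
  refine ENNReal.toReal_mono (𝓕 f).integrable.hasFiniteIntegral.ne
    ((enorm_fourierInv_le _ x).trans (lintegral_mono fun ξ => ?_))
  rw [enorm_mul]
  refine mul_le_of_le_one_left' ?_
  rw [← ofReal_norm, Complex.norm_real, Real.norm_of_nonneg (hχ.nonneg _)]
  exact ENNReal.ofReal_le_one.2 (hχ.le_one _)

lemma exists_integral_norm_Sproj_le (hχ : IsLPCutoff χ) (f : 𝓢(EuclideanSpace ℝ (Fin n), ℂ)) :
    ∃ M : ℝ, ∀ k, ∫ x, ‖Sproj χ k f x‖ ≤ M := by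
  have hK := lintegral_enorm_fourierInv_lt_top hχ.contDiff hχ.hasCompactSupport
  have hf : eLpNorm f 1 volume < ∞ := (f.memLp 1 volume).2
  have hbound : ∀ k, eLpNorm (Sproj χ k f) 1 volume ≤
      (∫⁻ x, ‖𝓕⁻ (fun ξ => (χ ξ : ℂ)) x‖ₑ) * eLpNorm f 1 volume := fun k => by
    rw [Sproj_eq_fourierMult]
    exact eLpNorm_fourierMult_comp_smul_le hχ.contDiff hχ.hasCompactSupport
      (zpow_ne_zero _ two_ne_zero) le_rfl f
  have hfin := (ENNReal.mul_lt_top hK hf).ne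
  generalize (∫⁻ x, ‖𝓕⁻ (fun ξ => (χ ξ : ℂ)) x‖ₑ) * eLpNorm f 1 volume = M at hbound hfin
  refine ⟨M.toReal, fun k => ?_⟩
  have hS : AEStronglyMeasurable (Sproj χ k f) volume := by
    obtain ⟨a, -, ha⟩ := hχ.exists_Sproj_eq k f
    rw [ha]
    exact (SchwartzMap.continuous _).aestronglyMeasurable
  rw [integral_norm_eq_lintegral_enorm hS, ← eLpNorm_one_eq_lintegral_enorm]
  exact ENNReal.toReal_mono hfin (hbound k)

end IsLPCutoff

end LittlewoodPaley

section Paraproduct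

variable {n : ℕ} {χ : EuclideanSpace ℝ (Fin n) → ℝ}

namespace IsLPCutoff

/-- Each term of the para-product is a Schwartz function with Fourier support in a dyadic annulus,
so that only finitely many terms interact with a given Littlewood–Paley block. -/
lemma exists_paraproduct_term (hχ : IsLPCutoff χ) (k : ℤ) (f₁ f₂ : 𝓢(EuclideanSpace ℝ (Fin n), ℂ)) :
    ∃ U : 𝓢(EuclideanSpace ℝ (Fin n), ℂ),
      (∀ x, U x = Dproj χ k f₁ x * Sproj χ (k - 1) f₂ x) ∧
      ∀ j ξ, blockSymbol χ ((2 : ℝ) ^ (-j) • ξ) ≠ 0 → k - j ∉ Finset.Icc (-2) 5 → 𝓕 U ξ = 0 := by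
  obtain ⟨a, ha, hDa⟩ := hχ.exists_Dproj_eq k f₁
  obtain ⟨b, hb, hSb⟩ := hχ.exists_Sproj_eq (k - 1) f₂
  refine ⟨schwartzMul (𝓕⁻ a) (𝓕⁻ b), fun x => by rw [hDa, hSb, schwartzMul_apply],
    fun j ξ hξ hjk => fourier_schwartzMul_eq_zero fun η hη => ?_⟩
  by_contra hbη
  rw [ha] at hη
  rw [hb] at hbη
  obtain ⟨hξ1, hξ2⟩ := hχ.norm_mem_of_blockSymbol_ne_zero hξ
  obtain ⟨hη1, hη2⟩ := hχ.norm_mem_of_blockSymbol_ne_zero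
    (Complex.ofReal_ne_zero.1 (left_ne_zero_of_mul hη))
  have hd := hχ.norm_le_of_ne_zero (Complex.ofReal_ne_zero.1 (left_ne_zero_of_mul hbη))
  rw [zpow_sub_one₀ two_ne_zero] at hd
  have htri1 : ‖ξ‖ ≤ ‖ξ - η‖ + ‖η‖ := by simpa using norm_add_le (ξ - η) η
  have htri2 : ‖η‖ ≤ ‖ξ - η‖ + ‖ξ‖ := by
    simpa [norm_sub_rev] using norm_add_le (η - ξ) ξ
  have hpos : (0 : ℝ) < 2 ^ k := by positivity
  rw [Finset.mem_Icc, not_and_or, not_le, not_le] at hjk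
  rcases hjk with hjk | hjk
  · have := zpow_le_zpow_right₀ (one_le_two (α := ℝ)) (show k + 3 ≤ j by omega)
    rw [zpow_add₀ two_ne_zero] at this
    norm_num at this
    linarith
  · have := zpow_le_zpow_right₀ (one_le_two (α := ℝ)) (show j + 6 ≤ k by omega)
    rw [zpow_add₀ two_ne_zero] at this
    norm_num at this
    linarith

lemma summable_paraproduct (hχ : IsLPCutoff χ) (f₁ f₂ : 𝓢(EuclideanSpace ℝ (Fin n), ℂ))
    (x : EuclideanSpace ℝ (Fin n)) :
    Summable fun k : ℤ => Dproj χ k f₁ x * Sproj χ (k - 1) f₂ x := by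
  obtain ⟨B, hB, hB0, hDB⟩ := hχ.exists_summable_norm_Dproj_le f₁
  obtain ⟨M, hM⟩ := hχ.exists_norm_Sproj_le f₂
  refine Summable.of_norm_bounded (hB.mul_right M) fun k => ?_
  rw [norm_mul]
  exact mul_le_mul (hDB k x) (hM _ x) (norm_nonneg _) (hB0 k)

lemma summable_integral_paraproduct_mul (hχ : IsLPCutoff χ)
    (f₁ f₂ g : 𝓢(EuclideanSpace ℝ (Fin n), ℂ)) :
    Summable fun k : ℤ => ∫ x, Dproj χ k f₁ x * Sproj χ (k - 1) f₂ x * g x := by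
  obtain ⟨B, hB, hB0, hDB⟩ := hχ.exists_summable_norm_Dproj_le f₁
  obtain ⟨M, hM⟩ := hχ.exists_norm_Sproj_le f₂
  refine Summable.of_norm_bounded ((hB.mul_right M).mul_right (∫ x, ‖g x‖)) fun k => ?_
  rw [← integral_const_mul]
  refine norm_integral_le_of_norm_le (g.integrable.norm.const_mul _) (ae_of_all _ fun x => ?_)
  rw [norm_mul, norm_mul]
  gcongr
  · exact hB0 k
  · exact hDB k x
  · exact hM _ x

lemma summable_integral_norm_paraproduct (hχ : IsLPCutoff χ)
    (f₁ f₂ : 𝓢(EuclideanSpace ℝ (Fin n), ℂ)) :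
    Summable fun k : ℤ => ∫ x, ‖Dproj χ k f₁ x * Sproj χ (k - 1) f₂ x‖ := by
  obtain ⟨B, hB, hB0, hDB⟩ := hχ.exists_summable_norm_Dproj_le f₁
  obtain ⟨M, hM⟩ := hχ.exists_integral_norm_Sproj_le f₂
  refine Summable.of_nonneg_of_le (fun k => integral_nonneg fun x => norm_nonneg _) (fun k => ?_)
    (hB.mul_right M)
  have hS : Integrable (Sproj χ (k - 1) f₂) := by
    obtain ⟨b, -, hb⟩ := hχ.exists_Sproj_eq (k - 1) f₂
    rw [hb]
    exact SchwartzMap.integrable _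
  calc ∫ x, ‖Dproj χ k f₁ x * Sproj χ (k - 1) f₂ x‖
      ≤ ∫ x, B k * ‖Sproj χ (k - 1) f₂ x‖ := by
        refine integral_mono_of_nonneg (ae_of_all _ fun x => norm_nonneg _)
          (hS.norm.const_mul _) (ae_of_all _ fun x => ?_)
        dsimp only
        rw [norm_mul]
        gcongr
        exact hDB k x
    _ ≤ B k * M := by
        rw [integral_const_mul]
        exact mul_le_mul_of_nonneg_left (hM _) (hB0 k)

lemma eLpNorm_Dproj_paraproduct_le (hχ : IsLPCutoff χ) {p p₁ p₂ : ℝ≥0∞} (hp : 1 ≤ p)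
    (hp12 : 1 / p = 1 / p₁ + 1 / p₂) (f₁ f₂ : 𝓢(EuclideanSpace ℝ (Fin n), ℂ)) (j : ℤ) :
    eLpNorm (Dproj χ j fun x => ∑' k : ℤ, Dproj χ k f₁ x * Sproj χ (k - 1) f₂ x) p volume ≤
      (∫⁻ x, ‖𝓕⁻ (fun ξ => (blockSymbol χ ξ : ℂ)) x‖ₑ) * ∑ i ∈ Finset.Icc (-2 : ℤ) 5,
        eLpNorm (Dproj χ (j + i) f₁) p₁ volume *
          eLpNorm (Sproj χ (j + i - 1) f₂) p₂ volume := by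
  choose U hU hU0 using fun k => hχ.exists_paraproduct_term k f₁ f₂
  have hFsum : ∀ ξ, 𝓕 (fun x => ∑' k : ℤ, Dproj χ k f₁ x * Sproj χ (k - 1) f₂ x) ξ =
      ∑' k, 𝓕 (U k) ξ := fun ξ => by
    have hsummable := hχ.summable_integral_norm_paraproduct f₁ f₂
    have hpt := hχ.summable_paraproduct f₁ f₂
    simp only [← hU] at hsummable hpt ⊢
    have hs := hasSum_integral_of_summable_integral_norm
      (F := fun k x => 𝐞 (-inner ℝ x ξ) • U k x)
      (fun k => (Real.fourierIntegral_convergent_iff ξ).2 (U k).integrable)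
      (by simpa only [Circle.norm_smul] using hsummable)
    simp only [SchwartzMap.fourier_coe, Real.fourier_eq]
    rw [hs.tsum_eq]
    exact integral_congr_ae (ae_of_all _ fun x => ((hpt x).tsum_const_smul _).symm)
  set W : 𝓢(EuclideanSpace ℝ (Fin n), ℂ) := ∑ i ∈ Finset.Icc (-2 : ℤ) 5, U (j + i) with hW
  have hFW : ∀ ξ, 𝓕 W ξ = ∑ i ∈ Finset.Icc (-2 : ℤ) 5, 𝓕 (U (j + i)) ξ := fun ξ => by
    rw [hW, FourierTransform.fourier_sum, sum_apply]
  have hDW : (Dproj χ j fun x => ∑' k : ℤ, Dproj χ k f₁ x * Sproj χ (k - 1) f₂ x) =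
      fourierMult (fun ξ => blockSymbol χ ((2 : ℝ) ^ (-j) • ξ)) W := by
    rw [Dproj_eq_fourierMult]
    refine congrArg 𝓕⁻ (funext fun ξ => ?_)
    by_cases hξ : blockSymbol χ ((2 : ℝ) ^ (-j) • ξ) = 0
    · simp only [hξ, Complex.ofReal_zero, zero_mul]
    congr 1
    rw [hFsum, ← (Equiv.addLeft j).tsum_eq, tsum_eq_sum (s := Finset.Icc (-2 : ℤ) 5)]
    · exact (hFW ξ).symm
    · exact fun i hi => hU0 _ j ξ hξ (by simpa using hi)
  have : ENNReal.HolderTriple p₁ p₂ p := ⟨by simpa using hp12.symm⟩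
  rw [hDW]
  refine (eLpNorm_fourierMult_comp_smul_le hχ.contDiff_blockSymbol
    hχ.hasCompactSupport_blockSymbol (by positivity) hp W).trans ?_
  gcongr
  have hWcoe : ⇑W = ∑ i ∈ Finset.Icc (-2 : ℤ) 5, ⇑(U (j + i)) := by
    funext x
    rw [hW, sum_apply, Finset.sum_apply]
  rw [hWcoe]
  refine (eLpNorm_sum_le (fun i _ => (U _).continuous.aestronglyMeasurable) hp).trans
    (Finset.sum_le_sum fun i _ => ?_)
  have hUeq : ⇑(U (j + i)) = Dproj χ (j + i) f₁ • Sproj χ (j + i - 1) f₂ := funext (hU _)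
  obtain ⟨a, -, ha⟩ := hχ.exists_Dproj_eq (j + i) f₁
  obtain ⟨b, -, hb⟩ := hχ.exists_Sproj_eq (j + i - 1) f₂
  rw [hUeq]
  refine eLpNorm_smul_le_mul_eLpNorm ?_ ?_
  · rw [hb]
    exact (SchwartzMap.continuous _).aestronglyMeasurable
  · rw [ha]
    exact (SchwartzMap.continuous _).aestronglyMeasurable

lemma lqNorm_Sproj_le (hχ : IsLPCutoff χ) [NeZero n] {p q : ℝ≥0∞} (hp : 1 ≤ p) (hq : 1 ≤ q) (α : ℝ)
    (f : 𝓢(EuclideanSpace ℝ (Fin n), ℂ)) :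
    lqNorm q (fun k => (2 : ℝ≥0∞) ^ ((k : ℝ) * -α) * eLpNorm (Sproj χ (k - 1) f) p volume) ≤
      (∑' l : ℕ, (2 : ℝ≥0∞) ^ (-((l : ℝ) + 2) * α)) * besovNorm χ (-α) p q f := by
  rw [besovNorm, ← ENNReal.tsum_mul_right]
  calc _ ≤ lqNorm q fun k => ∑' l : ℕ, (2 : ℝ≥0∞) ^ (-((l : ℝ) + 2) * α) *
        ((2 : ℝ≥0∞) ^ (((k + (-2 - l) : ℤ) : ℝ) * -α) *
          eLpNorm (Dproj χ (k + (-2 - l)) f) p volume) := by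
        refine lqNorm_mono q fun k => ?_
        refine (mul_le_mul_right (hχ.eLpNorm_Sproj_le hp (k - 1) f) _).trans_eq ?_
        rw [← ENNReal.tsum_mul_left]
        refine tsum_congr fun l => ?_
        rw [← mul_assoc, ← ENNReal.rpow_add _ _ two_ne_zero ENNReal.ofNat_ne_top]
        congr 2
        · push_cast
          ring
        · congr 1
          ring
    _ ≤ _ := by
        refine (lqNorm_tsum_le hq _).trans_eq (tsum_congr fun l => ?_)
        rw [lqNorm_const_mul hq]
        congr 1
        exact lqNorm_comp_add_right q (fun k : ℤ => (2 : ℝ≥0∞) ^ ((k : ℝ) * -α) *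
          eLpNorm (Dproj χ k f) p volume) (-2 - l)

end IsLPCutoff

lemma tsum_two_rpow_lt_top {α : ℝ} (hα : 0 < α) :
    ∑' l : ℕ, (2 : ℝ≥0∞) ^ (-((l : ℝ) + 2) * α) < ∞ := by
  have h : ∀ l : ℕ, (2 : ℝ≥0∞) ^ (-((l : ℝ) + 2) * α) =
      (2 : ℝ≥0∞) ^ (-2 * α) * ((2 : ℝ≥0∞) ^ (-α)) ^ l := fun l => by
    rw [← ENNReal.rpow_natCast, ← ENNReal.rpow_mul,
      ← ENNReal.rpow_add _ _ two_ne_zero ENNReal.ofNat_ne_top]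
    congr 1
    ring
  have hlt : (2 : ℝ≥0∞) ^ (-α) < 1 :=
    ENNReal.rpow_lt_one_of_one_lt_of_neg ENNReal.one_lt_two (neg_lt_zero.2 hα)
  simp only [h]
  rw [ENNReal.tsum_mul_left, ENNReal.tsum_geometric]
  exact ENNReal.mul_lt_top (ENNReal.rpow_ne_top_of_ne_zero two_ne_zero ENNReal.ofNat_ne_top).lt_top
    (ENNReal.inv_lt_top.2 (tsub_pos_of_lt hlt))

end Paraproduct

/-- **Para-product estimate** `‖T_{f₂} f₁‖_{Ḃ^s_{p,q}} ≤ C ‖f₁‖_{Ḃ^{s+α}_{p₁,q₁}}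
‖f₂‖_{Ḃ^{-α}_{p₂,q₂}}`: the series `T_{f₂} f₁ = Σ_{k∈ℤ} (Δ_k f₁)(S_{k-1} f₂)` converges
in the space of tempered distributions (pointwise, and when paired against any Schwartz
test function), and its sum obeys the stated Besov bound; the constant `C` depends only
on `n`, `χ`, `s`, `α` and the indices. -/
theorem paraproduct_estimate
    (n : ℕ) (hn : 1 ≤ n) (χ : EuclideanSpace ℝ (Fin n) → ℝ) (hχ : IsLPCutoff χ)
    (s α : ℝ) (hs : 0 < s) (hα : 0 < α)
    (p q p₁ p₂ q₁ q₂ : ℝ≥0∞)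
    (hp : 1 ≤ p) (hq : 1 ≤ q) (hp₁ : 1 ≤ p₁) (hp₂ : 1 ≤ p₂) (hq₁ : 1 ≤ q₁) (hq₂ : 1 ≤ q₂)
    (hp12 : 1 / p = 1 / p₁ + 1 / p₂) (hq12 : 1 / q = 1 / q₁ + 1 / q₂) :
    ∃ C : ℝ≥0∞, 0 < C ∧ C < ∞ ∧
      ∀ f₁ f₂ : 𝓢(EuclideanSpace ℝ (Fin n), ℂ),
        (∀ x, Summable fun k : ℤ => Dproj χ k (⇑f₁) x * Sproj χ (k - 1) (⇑f₂) x) ∧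
        (∀ g : 𝓢(EuclideanSpace ℝ (Fin n), ℂ),
          Summable fun k : ℤ => ∫ x, Dproj χ k (⇑f₁) x * Sproj χ (k - 1) (⇑f₂) x * g x) ∧
        besovNorm χ s p q (fun x => ∑' k : ℤ, Dproj χ k (⇑f₁) x * Sproj χ (k - 1) (⇑f₂) x) ≤
          C * (besovNorm χ (s + α) p₁ q₁ ⇑f₁ * besovNorm χ (-α) p₂ q₂ ⇑f₂) := by
  have : NeZero n := ⟨by omega⟩
  set K := ∫⁻ x, ‖𝓕⁻ (fun ξ => (blockSymbol χ ξ : ℂ)) x‖ₑ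
  set A := ∑' l : ℕ, (2 : ℝ≥0∞) ^ (-((l : ℝ) + 2) * α)
  set P := ∑ i ∈ Finset.Icc (-2 : ℤ) 5, (2 : ℝ≥0∞) ^ (-(i : ℝ) * s)
  have hK : K < ∞ :=
    lintegral_enorm_fourierInv_lt_top hχ.contDiff_blockSymbol hχ.hasCompactSupport_blockSymbol
  have hA : A < ∞ := tsum_two_rpow_lt_top hα
  have hP : P < ∞ := ENNReal.sum_lt_top.2 fun i _ =>
    (ENNReal.rpow_ne_top_of_ne_zero two_ne_zero ENNReal.ofNat_ne_top).lt_top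
  refine ⟨K * P * A + 1, by positivity,
    ENNReal.add_lt_top.2 ⟨ENNReal.mul_lt_top (ENNReal.mul_lt_top hK hP) hA, ENNReal.one_lt_top⟩,
    fun f₁ f₂ => ⟨hχ.summable_paraproduct f₁ f₂, hχ.summable_integral_paraproduct_mul f₁ f₂, ?_⟩⟩
  set a : ℤ → ℝ≥0∞ := fun k =>
    (2 : ℝ≥0∞) ^ ((k : ℝ) * (s + α)) * eLpNorm (Dproj χ k f₁) p₁ volume with ha
  set b : ℤ → ℝ≥0∞ := fun k =>
    (2 : ℝ≥0∞) ^ ((k : ℝ) * -α) * eLpNorm (Sproj χ (k - 1) f₂) p₂ volume with hb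
  have hblock : ∀ j : ℤ, (2 : ℝ≥0∞) ^ ((j : ℝ) * s) * eLpNorm (Dproj χ j fun x =>
      ∑' k : ℤ, Dproj χ k f₁ x * Sproj χ (k - 1) f₂ x) p volume ≤
      ∑ i ∈ Finset.Icc (-2 : ℤ) 5, K * (2 : ℝ≥0∞) ^ (-(i : ℝ) * s) * (a (j + i) * b (j + i)) := by
    intro j
    refine (mul_le_mul_right (hχ.eLpNorm_Dproj_paraproduct_le hp hp12 f₁ f₂ j) _).trans_eq ?_
    rw [Finset.mul_sum, Finset.mul_sum]
    refine Finset.sum_congr rfl fun i _ => ?_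
    have hexp : (2 : ℝ≥0∞) ^ ((j : ℝ) * s) = (2 : ℝ≥0∞) ^ (-(i : ℝ) * s) *
        ((2 : ℝ≥0∞) ^ (((j + i : ℤ) : ℝ) * (s + α)) * (2 : ℝ≥0∞) ^ (((j + i : ℤ) : ℝ) * -α)) := by
      rw [← ENNReal.rpow_add _ _ two_ne_zero ENNReal.ofNat_ne_top,
        ← ENNReal.rpow_add _ _ two_ne_zero ENNReal.ofNat_ne_top]
      congr 1
      push_cast
      ring
    rw [hexp, ha, hb]
    ring
  calc besovNorm χ s p q (fun x => ∑' k : ℤ, Dproj χ k f₁ x * Sproj χ (k - 1) f₂ x)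
      ≤ ∑ i ∈ Finset.Icc (-2 : ℤ) 5, lqNorm q fun j =>
          K * (2 : ℝ≥0∞) ^ (-(i : ℝ) * s) * (a (j + i) * b (j + i)) :=
        (lqNorm_mono q hblock).trans (lqNorm_sum_le hq _ _)
    _ = K * P * lqNorm q fun j => a j * b j := by
        rw [Finset.mul_sum, Finset.sum_mul]
        refine Finset.sum_congr rfl fun i _ => ?_
        rw [lqNorm_const_mul hq]
        congr 1
        exact lqNorm_comp_add_right q (fun j => a j * b j) i
    _ ≤ K * P * (besovNorm χ (s + α) p₁ q₁ f₁ * (A * besovNorm χ (-α) p₂ q₂ f₂)) := by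
        gcongr
        refine (lqNorm_mul_le hq hq₁ hq₂ hq12 a b).trans ?_
        exact mul_le_mul_right (hχ.lqNorm_Sproj_le hp₂ hq₂ α f₂) _
    _ = K * P * A * (besovNorm χ (s + α) p₁ q₁ f₁ * besovNorm χ (-α) p₂ q₂ f₂) := by ring
    _ ≤ (K * P * A + 1) * (besovNorm χ (s + α) p₁ q₁ f₁ * besovNorm χ (-α) p₂ q₂ f₂) := by
        gcongr
        exact le_self_add
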